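/- arXiv:2309.15398 — 5 statements merged into one kernel-verified Lean document; each statement's English description precedes it below -/
import Mathlib

section
/- Let p ∈ ℝ[x], let σ0 ∈ QM(c_in), and set h = p − σ0. Assume there exist an integer k1 ≥ 1 and σ1 ∈ Σ[x] such that h^{2k1} + σ1 ∈ Ideal(c_eq). Then there exists k0 ∈ ℕ such that for every real ε > 0, p + ε ∈ Ideal(c_eq)_{2k0} + QM(c_in)_{2k0}. -/
open MvPolynomial MeasureTheory

noncomputable section

/-- The space of real polynomials in `n` variables. -/
abbrev RPoly (n : ℕ) : Type := MvPolynomial (Fin n) ℝ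

/-- The degree `|α|` of a monomial power `α`. -/
def mdeg {n : ℕ} (α : Fin n →₀ ℕ) : ℕ := ∑ i, α i

/-- `p` is a sum of squares of polynomials. -/
def IsSOS {n : ℕ} (p : RPoly n) : Prop :=
  ∃ L : List (RPoly n), p = (L.map (fun q => q ^ 2)).sum

/-- The truncation `QM(g)_k` of the quadratic module generated by `(g j)_{j ∈ S}`. -/
def QModDeg {n : ℕ} {κ : Type} (S : Finset κ) (g : κ → RPoly n) (k : ℕ) :
    Set (RPoly n) :=
  {p | ∃ σ0 : RPoly n, ∃ σ : κ → RPoly n,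
      IsSOS σ0 ∧ σ0.totalDegree ≤ k ∧
      (∀ j ∈ S, IsSOS (σ j) ∧ (σ j).totalDegree + (g j).totalDegree ≤ k) ∧
      p = σ0 + ∑ j ∈ S, g j * σ j}

/-- The truncation `Ideal(h)_k` of the ideal generated by `(h j)_{j ∈ S}`. -/
def IdealDeg {n : ℕ} {ι : Type} (S : Finset ι) (h : ι → RPoly n) (k : ℕ) :
    Set (RPoly n) :=
  {p | ∃ q : ι → RPoly n,
      (∀ j ∈ S, (q j).totalDegree + (h j).totalDegree ≤ k) ∧
      p = ∑ j ∈ S, h j * q j}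

/-- The quadratic module `QM(g)` generated by `(g j)_{j ∈ S}`. -/
def QModFull {n : ℕ} {κ : Type} (S : Finset κ) (g : κ → RPoly n) : Set (RPoly n) :=
  {p | ∃ σ0 : RPoly n, ∃ σ : κ → RPoly n,
      IsSOS σ0 ∧ (∀ j ∈ S, IsSOS (σ j)) ∧ p = σ0 + ∑ j ∈ S, g j * σ j}

/-- The ideal `Ideal(h)` generated by `(h j)_{j ∈ S}`. -/
def IdealFull {n : ℕ} {ι : Type} (S : Finset ι) (h : ι → RPoly n) : Set (RPoly n) :=
  (Ideal.span (h '' (S : Set ι)) : Ideal (RPoly n))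

/-- `Ideal(c_eq) + QM(c_in)` is archimedean. -/
def ArchimedeanQM {n : ℕ} (E I : Finset ℕ) (c : ℕ → RPoly n) : Prop :=
  ∃ R : ℝ, 0 < R ∧ ∃ p1 ∈ IdealFull E c, ∃ p2 ∈ QModFull I c,
    (C R : RPoly n) - ∑ i, (X i : RPoly n) ^ 2 = p1 + p2

/-- The basic closed semialgebraic set `K`. -/
def Kset {n : ℕ} (E I : Finset ℕ) (c : ℕ → RPoly n) : Set (Fin n → ℝ) :=
  {x | (∀ j ∈ E, eval x (c j) = 0) ∧ (∀ j ∈ I, 0 ≤ eval x (c j))}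

/-- The bilinear pairing `⟨p, y⟩ = ∑_α p_α y_α`. -/
def pairing {n : ℕ} (p : RPoly n) (y : (Fin n →₀ ℕ) → ℝ) : ℝ :=
  ∑ α ∈ p.support, p.coeff α * y α

/-- Membership in the moment cone `ℛ_d(K)`: the entries `y_α`, `|α| ≤ d`, are the
moments of a finite Borel measure supported in the closed set `K`. -/
def InMomentCone {n : ℕ} (d : ℕ) (K : Set (Fin n → ℝ)) (y : (Fin n →₀ ℕ) → ℝ) : Prop :=
  ∃ μ : Measure (Fin n → ℝ), IsFiniteMeasure μ ∧ μ Kᶜ = 0 ∧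
    ∀ α : Fin n →₀ ℕ, mdeg α ≤ d →
      Integrable (fun x => ∏ i, x i ^ α i) μ ∧
      y α = ∫ x, (∏ i, x i ^ α i) ∂μ

/-- The cone `P_d(K)` of polynomials of degree at most `d` that are nonnegative on `K`. -/
def PdCone {n : ℕ} (d : ℕ) (K : Set (Fin n → ℝ)) : Set (RPoly n) :=
  {p | p.totalDegree ≤ d ∧ ∀ x ∈ K, 0 ≤ eval x p}

/-- The interior of `P_d(K)` in the coefficient topology of `ℝ[x]_d`. -/
def PdInterior {n : ℕ} (d : ℕ) (K : Set (Fin n → ℝ)) : Set (RPoly n) :=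
  {p | p.totalDegree ≤ d ∧ ∃ ε : ℝ, 0 < ε ∧ ∀ q : RPoly n, q.totalDegree ≤ d →
      (∀ α : Fin n →₀ ℕ, |q.coeff α - p.coeff α| ≤ ε) → ∀ x ∈ K, 0 ≤ eval x q}

instance degLEFintype (n t : ℕ) : Fintype {α : Fin n →₀ ℕ // mdeg α ≤ t} := by
  apply Fintype.ofInjective
    (fun a : {α : Fin n →₀ ℕ // mdeg α ≤ t} =>
      (fun i => (⟨a.1 i, by
        have h1 : a.1 i ≤ mdeg a.1 :=
          Finset.single_le_sum (fun j _ => Nat.zero_le _) (Finset.mem_univ i)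
        exact Nat.lt_succ_of_le (le_trans h1 a.2)⟩ : Fin (t + 1))) :
        {α : Fin n →₀ ℕ // mdeg α ≤ t} → (Fin n → Fin (t + 1)))
  intro a b hab
  apply Subtype.ext
  ext i
  exact congrArg Fin.val (congrFun hab i)

/-- The moment matrix `M_t[w]`, indexed by monomial powers of degree at most `t`. -/
def momentMatrix {n : ℕ} (t : ℕ) (w : (Fin n →₀ ℕ) → ℝ) :
    Matrix {α : Fin n →₀ ℕ // mdeg α ≤ t} {α : Fin n →₀ ℕ // mdeg α ≤ t} ℝ :=
  fun α β => w (α.1 + β.1)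

/-- `w` admits a flat truncation: for some `d0 ≤ t ≤ k`,
`rank M_{t-dK}[w] = rank M_t[w]`. -/
def HasFlatTruncation {n : ℕ} (d0 dK k : ℕ) (w : (Fin n →₀ ℕ) → ℝ) : Prop :=
  ∃ t : ℕ, d0 ≤ t ∧ t ≤ k ∧
    (momentMatrix (t - dK) w).rank = (momentMatrix t w).rank

/-- The gradient of a polynomial at a point. -/
def gradP {n : ℕ} (p : RPoly n) (u : Fin n → ℝ) : Fin n → ℝ :=
  fun i => eval u (pderiv i p)

/-- The Hessian of a polynomial at a point. -/
def hessP {n : ℕ} (p : RPoly n) (u : Fin n → ℝ) : Fin n → Fin n → ℝ :=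
  fun i j => eval u (pderiv i (pderiv j p))

/-- The classical optimality conditions (LICQC, KKT with SCC and SOSC) at the point `u`
for the problem: minimize `F` subject to `ge j = 0` (`j ∈ Es`), `gi j ≥ 0` (`j ∈ Is`). -/
def OptCondsAt {n : ℕ} {ι κ : Type}
    (Es : Finset ι) (ge : ι → RPoly n) (Is : Finset κ) (gi : κ → RPoly n)
    (F : RPoly n) (u : Fin n → ℝ) : Prop :=
  -- LICQC: gradients of active constraints are linearly independent
  LinearIndependent ℝ
    (Sum.elim
      (fun j : {j : ι // j ∈ Es ∧ eval u (ge j) = 0} => gradP (ge j.1) u)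
      (fun j : {j : κ // j ∈ Is ∧ eval u (gi j) = 0} => gradP (gi j.1) u)) ∧
  ∃ (lamE : ι → ℝ) (lamI : κ → ℝ),
    -- KKT stationarity
    (gradP F u =
      (∑ j ∈ Es, lamE j • gradP (ge j) u) + ∑ j ∈ Is, lamI j • gradP (gi j) u) ∧
    (∀ j ∈ Is, 0 ≤ lamI j ∧ lamI j * eval u (gi j) = 0) ∧
    -- SCC
    (∀ j ∈ Is, 0 < lamI j + eval u (gi j)) ∧
    -- SOSC
    (∀ v : Fin n → ℝ, v ≠ 0 →
      (∀ j ∈ Es, (∑ i, v i * gradP (ge j) u i) = 0) →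
      (∀ j ∈ Is, eval u (gi j) = 0 → (∑ i, v i * gradP (gi j) u i) = 0) →
      0 < ∑ i, ∑ i', v i *
        ((hessP F u i i' - ∑ j ∈ Es, lamE j * hessP (ge j) u i i')
          - ∑ j ∈ Is, lamI j * hessP (gi j) u i i') * v i')

/-- The degree-`ℓ` homogenization `x_0^ℓ p(x/x_0)` of `p`; the new variable `x_0`
is the variable of index `0` in `Fin (n+1)`. -/
def homogAux {n : ℕ} (ℓ : ℕ) (p : RPoly n) : RPoly (n + 1) :=
  ∑ α ∈ p.support,
    monomial
      (Finsupp.single (0 : Fin (n + 1)) (ℓ - mdeg α) + Finsupp.mapDomain Fin.succ α)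
      (p.coeff α)

/-- The homogenization `p̃` of `p`. -/
def homogenize {n : ℕ} (p : RPoly n) : RPoly (n + 1) := homogAux p.totalDegree p

/-- The polynomial `‖x̃‖² - 1`. -/
def sphereP (n : ℕ) : RPoly (n + 1) := (∑ i, (X i : RPoly (n + 1)) ^ 2) - 1

/-- The homogenization `K̃` of the set `K`. -/
def Khom {n : ℕ} (E I : Finset ℕ) (c : ℕ → RPoly n) : Set (Fin (n + 1) → ℝ) :=
  {x | (∀ j ∈ E, eval x (homogenize (c j)) = 0) ∧
       (∀ j ∈ I, 0 ≤ eval x (homogenize (c j))) ∧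
       (∑ i, (x i) ^ 2) = 1 ∧ 0 ≤ x 0}

/-- `K` is closed at infinity. -/
def ClosedAtInfinity {n : ℕ} (E I : Finset ℕ) (c : ℕ → RPoly n) : Prop :=
  Khom E I c = closure (Khom E I c ∩ {x | 0 < x 0})

/-- The tuple `c̃_eq`: the homogenizations `c̃_j` together with `‖x̃‖² - 1`
(the latter indexed by `none`). -/
def gEqH {n : ℕ} (c : ℕ → RPoly n) : Option ℕ → RPoly (n + 1) :=
  fun o => o.elim (sphereP n) (fun j => homogenize (c j))

/-- The tuple `c̃_in`: the homogenizations `c̃_j` together with `x_0`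
(the latter indexed by `none`). -/
def gInH {n : ℕ} (c : ℕ → RPoly n) : Option ℕ → RPoly (n + 1) :=
  fun o => o.elim (X 0) (fun j => homogenize (c j))

/-- The index set of a tuple extended by one extra entry (indexed by `none`). -/
def OS (S : Finset ℕ) : Finset (Option ℕ) := insert none (S.image some)

/-- Feasibility of `θ` for the linear conic problem (P). -/
def PFeas {n m : ℕ} (m1 d : ℕ) (f : RPoly n) (a : Fin m → RPoly n)
    (K : Set (Fin n → ℝ)) (θ : Fin m → ℝ) : Prop :=
  (∀ i : Fin m, m1 ≤ (i : ℕ) → 0 ≤ θ i) ∧ (f - ∑ i, C (θ i) * a i) ∈ PdCone d K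

/-- The optimal value `ϑ*` of the linear conic problem (P). -/
def PVal {n m : ℕ} (m1 d : ℕ) (f : RPoly n) (a : Fin m → RPoly n) (b : Fin m → ℝ)
    (K : Set (Fin n → ℝ)) : ℝ :=
  sSup {v : ℝ | ∃ θ : Fin m → ℝ, PFeas m1 d f a K θ ∧ v = ∑ i, b i * θ i}

/-- Feasibility of `y` for the generalized moment problem (M). -/
def MFeas {n m : ℕ} (m1 d : ℕ) (a : Fin m → RPoly n) (b : Fin m → ℝ)
    (K : Set (Fin n → ℝ)) (y : (Fin n →₀ ℕ) → ℝ) : Prop :=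
  InMomentCone d K y ∧
  (∀ i : Fin m, (i : ℕ) < m1 → pairing (a i) y = b i) ∧
  (∀ i : Fin m, m1 ≤ (i : ℕ) → b i ≤ pairing (a i) y)

/-- The optimal value `φ*` of the generalized moment problem (M). -/
def MVal {n m : ℕ} (m1 d : ℕ) (f : RPoly n) (a : Fin m → RPoly n) (b : Fin m → ℝ)
    (K : Set (Fin n → ℝ)) : ℝ :=
  sInf {v : ℝ | ∃ y : (Fin n →₀ ℕ) → ℝ, MFeas m1 d a b K y ∧ v = pairing f y}

/-- The optimal value `ϑ_k` of the `k`th SOS relaxation of (P). -/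
def SOSRelaxVal {n m : ℕ} {ι κ : Type} (m1 : ℕ) (f : RPoly n) (a : Fin m → RPoly n)
    (b : Fin m → ℝ) (Es : Finset ι) (ge : ι → RPoly n) (Is : Finset κ) (gi : κ → RPoly n)
    (k : ℕ) : ℝ :=
  sSup {v : ℝ | ∃ θ : Fin m → ℝ, (∀ i : Fin m, m1 ≤ (i : ℕ) → 0 ≤ θ i) ∧
      (∃ p1 ∈ IdealDeg Es ge (2 * k), ∃ p2 ∈ QModDeg Is gi (2 * k),
        f - ∑ i, C (θ i) * a i = p1 + p2) ∧
      v = ∑ i, b i * θ i}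

/-- The semidefinite constraints of the `k`th moment relaxation:
the localizing vectors of the equality constraints vanish, and the localizing
matrices of the inequality constraints and the moment matrix are positive
semidefinite (stated equivalently via the associated quadratic forms). -/
def MomRelaxPSD {n : ℕ} {ι κ : Type} (Es : Finset ι) (ge : ι → RPoly n)
    (Is : Finset κ) (gi : κ → RPoly n) (k : ℕ) (w : (Fin n →₀ ℕ) → ℝ) : Prop :=
  (∀ j ∈ Es, ∀ p : RPoly n, p.totalDegree + (ge j).totalDegree ≤ 2 * k →
      pairing (ge j * p) w = 0) ∧
  (∀ j ∈ Is, ∀ p : RPoly n, p.totalDegree + ((gi j).totalDegree + 1) / 2 ≤ k →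
      0 ≤ pairing (gi j * p ^ 2) w) ∧
  (∀ p : RPoly n, p.totalDegree ≤ k → 0 ≤ pairing (p ^ 2) w)

/-- Feasibility of `w` for the `k`th moment relaxation of (M). -/
def GMomFeas {n m : ℕ} {ι κ : Type} (m1 : ℕ) (a : Fin m → RPoly n) (b : Fin m → ℝ)
    (Es : Finset ι) (ge : ι → RPoly n) (Is : Finset κ) (gi : κ → RPoly n) (k : ℕ)
    (w : (Fin n →₀ ℕ) → ℝ) : Prop :=
  (∀ i : Fin m, (i : ℕ) < m1 → pairing (a i) w = b i) ∧
  (∀ i : Fin m, m1 ≤ (i : ℕ) → b i ≤ pairing (a i) w) ∧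
  MomRelaxPSD Es ge Is gi k w

/-- The optimal value `φ_k` of the `k`th moment relaxation of (M). -/
def GMomVal {n m : ℕ} {ι κ : Type} (m1 : ℕ) (f : RPoly n) (a : Fin m → RPoly n)
    (b : Fin m → ℝ) (Es : Finset ι) (ge : ι → RPoly n) (Is : Finset κ) (gi : κ → RPoly n)
    (k : ℕ) : ℝ :=
  sInf {v : ℝ | ∃ w : (Fin n →₀ ℕ) → ℝ,
      GMomFeas m1 a b Es ge Is gi k w ∧ v = pairing f w}

/-- The optimal value `f_k^den` of the `k`th order relaxation with denominators. -/
def DenRelaxVal {n : ℕ} (E I : Finset ℕ) (c : ℕ → RPoly n) (f : RPoly n) (d k : ℕ) : ℝ :=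
  sSup {γ : ℝ | ∃ p1 ∈ IdealDeg E c (2 * k + d), ∃ p2 ∈ QModDeg I c (2 * k + d),
      (1 + ∑ i, (X i : RPoly n) ^ 2) ^ k * (f - C γ) = p1 + p2}


/-- The degree bound `d_K = max_j ⌈deg(c_j)/2⌉`. -/
def dKOrig {n : ℕ} (E I : Finset ℕ) (c : ℕ → RPoly n) : ℕ :=
  (E ∪ I).sup fun j => ((c j).totalDegree + 1) / 2

/-- The degree bound `d_0` for the GMP relaxations. -/
def d0GMP {n m : ℕ} (f : RPoly n) (a : Fin m → RPoly n) (E I : Finset ℕ)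
    (c : ℕ → RPoly n) : ℕ :=
  max ((f.totalDegree + 1) / 2)
    (max (dKOrig E I c) (Finset.univ.sup fun i : Fin m => ((a i).totalDegree + 1) / 2))

/-- The degree bound `d̃_K` for the homogenized constraining tuples. -/
def dKHom {n : ℕ} (E I : Finset ℕ) (c : ℕ → RPoly n) : ℕ :=
  max ((OS E).sup fun o => ((gEqH c o).totalDegree + 1) / 2)
      ((OS I).sup fun o => ((gInH c o).totalDegree + 1) / 2)

end

/-!
For `ε > 0` and `k ≥ 1`, the univariate polynomial `t + ε + B t ^ (2 k)` with
`B = ε ^ (1 - 2 k) / 2` is an explicit sum of squares. Substituting `t = h` gives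
`p + ε = -B (h ^ (2 k) + σ1) + (σ0 + B σ1 + (h + ε + B h ^ (2 k)))`, whose first summand lies in the
ideal and whose second lies in the quadratic module. Only the real coefficients
depend on `ε`, so the degrees are bounded independently of it.
-/

lemma isSumSq_smul_of_nonneg {A : Type*} [CommSemiring A] [Algebra ℝ A] {r : ℝ} (hr : 0 ≤ r)
    {a : A} (ha : IsSumSq a) : IsSumSq (r • a) := by
  have hsq : algebraMap ℝ A r = algebraMap ℝ A √r * algebraMap ℝ A √r := by
    rw [← map_mul, Real.mul_self_sqrt hr]
  rw [Algebra.smul_def, hsq]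
  exact (IsSumSq.mul_self _).mul ha

lemma algebraMap_mul_algebraMap_inv {K A : Type*} [Semifield K] [Semiring A] [Algebra K A] {r : K}
    (hr : r ≠ 0) : algebraMap K A r * algebraMap K A r⁻¹ = 1 := by
  rw [← map_mul, mul_inv_cancel₀ hr, map_one]

section PositivityCertificates

variable {A : Type*} [CommRing A] [Algebra ℝ A]

lemma isSumSq_algebraMap_sub_sq_add_smul_pow (a : A) {δ : ℝ} (hδ : 0 < δ) (k : ℕ) :
    IsSumSq (algebraMap ℝ A δ - a ^ 2 + δ⁻¹ ^ k • a ^ (2 * (k + 1))) := by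
  induction k with
  | zero =>
    have hconst : algebraMap ℝ A δ - a ^ 2 + δ⁻¹ ^ 0 • a ^ (2 * (0 + 1)) = δ • (1 : A) := by
      simp [Algebra.algebraMap_eq_smul_one]
    rw [hconst]
    exact isSumSq_smul_of_nonneg hδ.le .one
  | succ k ih =>
    have hstep : algebraMap ℝ A δ - a ^ 2 + δ⁻¹ ^ (k + 1) • a ^ (2 * (k + 1 + 1)) =
        δ⁻¹ • ((algebraMap ℝ A δ - a ^ 2) * (algebraMap ℝ A δ - a ^ 2) +
          a * a * (algebraMap ℝ A δ - a ^ 2 + δ⁻¹ ^ k • a ^ (2 * (k + 1)))) := by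
      simp only [Algebra.smul_def, map_pow]
      linear_combination
        (a ^ 2 - algebraMap ℝ A δ) * algebraMap_mul_algebraMap_inv (A := A) hδ.ne'
    rw [hstep]
    exact isSumSq_smul_of_nonneg (inv_nonneg.2 hδ.le)
      ((IsSumSq.mul_self _).add ((IsSumSq.mul_self a).mul ih))

lemma isSumSq_add_algebraMap_add_smul_pow (a : A) {ε : ℝ} (hε : 0 < ε) (k : ℕ) :
    IsSumSq (a + algebraMap ℝ A ε + ((2 * ε)⁻¹ * (ε ^ 2)⁻¹ ^ k) • a ^ (2 * (k + 1))) := by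
  have hdecomp : a + algebraMap ℝ A ε + ((2 * ε)⁻¹ * (ε ^ 2)⁻¹ ^ k) • a ^ (2 * (k + 1)) =
      (2 * ε)⁻¹ • ((a + algebraMap ℝ A ε) * (a + algebraMap ℝ A ε) +
        (algebraMap ℝ A (ε ^ 2) - a ^ 2 + (ε ^ 2)⁻¹ ^ k • a ^ (2 * (k + 1)))) := by
    have hinv := algebraMap_mul_algebraMap_inv (A := A) (mul_pos two_pos hε).ne'
    simp only [Algebra.smul_def, map_mul, map_pow, map_ofNat] at hinv ⊢
    linear_combination -(a + algebraMap ℝ A ε) * hinv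
  rw [hdecomp]
  exact isSumSq_smul_of_nonneg (by positivity) ((IsSumSq.mul_self _).add
    (isSumSq_algebraMap_sub_sq_add_smul_pow a (by positivity) k))

end PositivityCertificates

lemma totalDegree_add_C_add_smul_pow_le {σ R : Type*} [CommSemiring R] (f : MvPolynomial σ R)
    (r s : R) {m : ℕ} (hm : m ≠ 0) :
    (f + C r + s • f ^ m).totalDegree ≤ m * f.totalDegree := by
  have hlinear : (f + C r).totalDegree ≤ m * f.totalDegree := calc
    (f + C r).totalDegree ≤ max f.totalDegree (C r).totalDegree := totalDegree_add _ _
    _ = f.totalDegree := by rw [totalDegree_C, Nat.max_zero]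
    _ ≤ m * f.totalDegree := Nat.le_mul_of_pos_left _ (Nat.pos_of_ne_zero hm)
  have hpow : (s • f ^ m).totalDegree ≤ m * f.totalDegree :=
    (totalDegree_smul_le _ _).trans (totalDegree_pow _ _)
  exact (totalDegree_add _ _).trans (max_le hlinear hpow)

section Truncation

variable {n : ℕ} {ι : Type} {S : Finset ι} {g : ι → RPoly n}

lemma isSOS_iff_isSumSq {f : RPoly n} : IsSOS f ↔ IsSumSq f := by
  constructor
  · rintro ⟨L, rfl⟩
    induction L with
    | nil => exact .zero
    | cons q L ih => simpa only [List.map_cons, List.sum_cons, sq] using ih.sq_add q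
  · intro hf
    induction hf with
    | zero => exact ⟨[], rfl⟩
    | sq_add q _ ih =>
      obtain ⟨L, rfl⟩ := ih
      exact ⟨q :: L, by rw [List.map_cons, List.sum_cons, sq]⟩

lemma IsSOS.add {f₁ f₂ : RPoly n} (h₁ : IsSOS f₁) (h₂ : IsSOS f₂) : IsSOS (f₁ + f₂) :=
  isSOS_iff_isSumSq.2 ((isSOS_iff_isSumSq.1 h₁).add (isSOS_iff_isSumSq.1 h₂))

lemma IsSOS.smul {f : RPoly n} (hf : IsSOS f) {r : ℝ} (hr : 0 ≤ r) : IsSOS (r • f) :=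
  isSOS_iff_isSumSq.2 (isSumSq_smul_of_nonneg hr (isSOS_iff_isSumSq.1 hf))

lemma IsSOS.mem_qModFull {f : RPoly n} (hf : IsSOS f) : f ∈ QModFull S g :=
  ⟨f, 0, hf, fun _ _ => ⟨[], rfl⟩, by simp⟩

lemma idealDeg_mono {k l : ℕ} (hkl : k ≤ l) : IdealDeg S g k ⊆ IdealDeg S g l := by
  rintro f ⟨q, hq, rfl⟩
  exact ⟨q, fun j hj => (hq j hj).trans hkl, rfl⟩

lemma smul_mem_idealDeg {k : ℕ} {f : RPoly n} (r : ℝ) (hf : f ∈ IdealDeg S g k) :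
    r • f ∈ IdealDeg S g k := by
  obtain ⟨q, hq, rfl⟩ := hf
  refine ⟨fun j => r • q j, fun j hj => ?_, by simp only [Finset.smul_sum, mul_smul_comm]⟩
  exact (Nat.add_le_add_right (totalDegree_smul_le _ _) _).trans (hq j hj)

lemma exists_mem_idealDeg_of_mem_idealFull {f : RPoly n} (hf : f ∈ IdealFull S g) :
    ∃ k, f ∈ IdealDeg S g k := by
  obtain ⟨q, rfl⟩ := (Submodule.mem_span_image_finset_iff_exists_fun' _).1 hf
  let deg j := (q j).totalDegree + (g j).totalDegree
  exact ⟨S.sup deg, q, fun _ hj => Finset.le_sup (f := deg) hj,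
    by simp only [smul_eq_mul, mul_comm]⟩

lemma qModDeg_mono {k l : ℕ} (hkl : k ≤ l) : QModDeg S g k ⊆ QModDeg S g l := by
  rintro f ⟨σ, τ, hσ, hσk, hτ, rfl⟩
  exact ⟨σ, τ, hσ, hσk.trans hkl, fun j hj => ⟨(hτ j hj).1, (hτ j hj).2.trans hkl⟩, rfl⟩

lemma add_mem_qModDeg {k : ℕ} {f₁ f₂ : RPoly n} (h₁ : f₁ ∈ QModDeg S g k)
    (h₂ : f₂ ∈ QModDeg S g k) : f₁ + f₂ ∈ QModDeg S g k := by
  obtain ⟨σ₁, τ₁, hσ₁, hσ₁k, hτ₁, rfl⟩ := h₁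
  obtain ⟨σ₂, τ₂, hσ₂, hσ₂k, hτ₂, rfl⟩ := h₂
  refine ⟨σ₁ + σ₂, τ₁ + τ₂, hσ₁.add hσ₂, (totalDegree_add _ _).trans (max_le hσ₁k hσ₂k),
    fun j hj => ⟨(hτ₁ j hj).1.add (hτ₂ j hj).1, ?_⟩, ?_⟩
  · have hdeg := totalDegree_add (τ₁ j) (τ₂ j)
    have hdeg₁ := (hτ₁ j hj).2
    have hdeg₂ := (hτ₂ j hj).2
    rw [Pi.add_apply]
    omega
  · simp only [Pi.add_apply, mul_add, Finset.sum_add_distrib]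
    ring

lemma smul_mem_qModDeg {k : ℕ} {f : RPoly n} {r : ℝ} (hr : 0 ≤ r) (hf : f ∈ QModDeg S g k) :
    r • f ∈ QModDeg S g k := by
  obtain ⟨σ, τ, hσ, hσk, hτ, rfl⟩ := hf
  refine ⟨r • σ, fun j => r • τ j, hσ.smul hr, (totalDegree_smul_le _ _).trans hσk,
    fun j hj => ⟨(hτ j hj).1.smul hr, ?_⟩, by simp only [smul_add, Finset.smul_sum, mul_smul_comm]⟩
  exact (Nat.add_le_add_right (totalDegree_smul_le _ _) _).trans (hτ j hj).2

-- A sum of squares of degree at most `k` need not itself lie in `QModDeg S g k`: the definition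
-- bounds `deg (g j)` by `k` even when the multiplier of `g j` is zero.
lemma add_isSOS_mem_qModDeg {k : ℕ} {f σ : RPoly n} (hf : f ∈ QModDeg S g k) (hσ : IsSOS σ)
    (hσk : σ.totalDegree ≤ k) : f + σ ∈ QModDeg S g k := by
  obtain ⟨σ', τ, hσ', hσ'k, hτ, rfl⟩ := hf
  exact ⟨σ' + σ, τ, hσ'.add hσ, (totalDegree_add _ _).trans (max_le hσ'k hσk), hτ,
    add_right_comm _ _ _⟩

lemma exists_mem_qModDeg_of_mem_qModFull {f : RPoly n} (hf : f ∈ QModFull S g) :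
    ∃ k, f ∈ QModDeg S g k := by
  obtain ⟨σ, τ, hσ, hτ, rfl⟩ := hf
  let deg j := (τ j).totalDegree + (g j).totalDegree
  exact ⟨max σ.totalDegree (S.sup deg), σ, τ, hσ, le_max_left _ _,
    fun j hj => ⟨hτ j hj, (Finset.le_sup (f := deg) hj).trans (le_max_right _ _)⟩, rfl⟩

end Truncation

theorem statement_12_general {n : ℕ} {ι κ : Type} {E : Finset ι} {ceq : ι → RPoly n}
    {I : Finset κ} {cin : κ → RPoly n} {p σ0 σ1 : RPoly n} (hσ0 : σ0 ∈ QModFull I cin)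
    {k1 : ℕ} (hk1 : 1 ≤ k1) (hσ1 : σ1 ∈ QModFull I cin)
    (hmem : (p - σ0) ^ (2 * k1) + σ1 ∈ IdealFull E ceq) :
    ∃ k0 : ℕ, ∀ ε : ℝ, 0 < ε →
      ∃ p1 ∈ IdealDeg E ceq (2 * k0), ∃ p2 ∈ QModDeg I cin (2 * k0), p + C ε = p1 + p2 := by
  obtain ⟨k, rfl⟩ := Nat.exists_eq_add_of_le' hk1
  obtain ⟨d, hd⟩ := exists_mem_idealDeg_of_mem_idealFull hmem
  obtain ⟨d0, hd0⟩ := exists_mem_qModDeg_of_mem_qModFull hσ0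
  obtain ⟨d1, hd1⟩ := exists_mem_qModDeg_of_mem_qModFull hσ1
  set h := p - σ0 with hh
  refine ⟨d + d0 + d1 + (k + 1) * h.totalDegree, fun ε hε => ?_⟩
  set K := 2 * (d + d0 + d1 + (k + 1) * h.totalDegree) with hK
  set B := (2 * ε)⁻¹ * (ε ^ 2)⁻¹ ^ k
  have hB0 : 0 ≤ B := by positivity
  have hsos : IsSOS (h + C ε + B • h ^ (2 * (k + 1))) :=
    isSOS_iff_isSumSq.2 (isSumSq_add_algebraMap_add_smul_pow h hε k)
  have hdeg : (h + C ε + B • h ^ (2 * (k + 1))).totalDegree ≤ K :=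
    (totalDegree_add_C_add_smul_pow_le h ε B (by omega)).trans (by rw [hK, mul_assoc]; omega)
  have hσ : σ0 + B • σ1 ∈ QModDeg I cin K :=
    add_mem_qModDeg (qModDeg_mono (by omega) hd0)
      (smul_mem_qModDeg hB0 (qModDeg_mono (by omega) hd1))
  refine ⟨(-B) • (h ^ (2 * (k + 1)) + σ1), smul_mem_idealDeg _ (idealDeg_mono (by omega) hd),
    _, add_isSOS_mem_qModDeg hσ hsos hdeg, ?_⟩
  rw [neg_smul, smul_add, ← sub_add_cancel p σ0, ← hh]
  ring

/-- a uniform degree bound `k0` such that `p + ε` lies in the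
truncated sum `Ideal(c_eq)_{2k0} + QM(c_in)_{2k0}` for every `ε > 0`. -/
theorem statement_12
    (n : ℕ) (E I : Finset ℕ) (hEI : Disjoint E I) (c : ℕ → RPoly n)
    (p σ0 : RPoly n) (hσ0 : σ0 ∈ QModFull I c)
    (h : RPoly n) (hh : h = p - σ0)
    (k1 : ℕ) (hk1 : 1 ≤ k1) (σ1 : RPoly n) (hσ1 : IsSOS σ1)
    (hmem : h ^ (2 * k1) + σ1 ∈ IdealFull E c) :
    ∃ k0 : ℕ, ∀ ε : ℝ, 0 < ε →
      ∃ p1 ∈ IdealDeg E c (2 * k0), ∃ p2 ∈ QModDeg I c (2 * k0),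
        p + C ε = p1 + p2 := by
  subst hh
  exact statement_12_general hσ0 hk1 hσ1.mem_qModFull hmem
end

section
/- Let k ≥ 1 and let w = (w_α)_{α∈ℕⁿ,|α|≤2k} ∈ ℝ^{ℕⁿ_{2k}}. If the moment matrix M_k[w] is positive semidefinite and w_0 = 0 (the entry indexed by the zero multi-index), then w_α = 0 for all α with |α| ≤ 2k − 2. -/
open MvPolynomial MeasureTheory

/-!
A vanishing diagonal entry of a positive semidefinite matrix annihilates its row, so `w_{2β} = 0`
forces `w_{β+γ} = 0` whenever `|β|, |γ| ≤ k`. For `|α| < 2k` write `α = β + γ` with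
`|β| = max(|α| - k, 0)`. Then `|γ| ≤ k`, and either `β = 0` or `|2β| < |α|`, so strong induction
on `|α|` applies.
-/

open scoped ComplexOrder in
theorem posSemidef_apply_eq_zero_of_diag_eq_zero {ι 𝕜 : Type*} [RCLike 𝕜] {A : Matrix ι ι 𝕜}
    (hA : A.PosSemidef) {i : ι} (hi : A i i = 0) (j : ι) : A i j = 0 := by
  have hminor : 0 ≤ A i i * A j j - A i j * A j i :=
    (hA.submatrix ![i, j]).det_nonneg.trans_eq (Matrix.det_fin_two _)
  have hnorm : A i j * A j i = ((‖A i j‖ ^ 2 : ℝ) : 𝕜) := by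
    rw [← hA.isHermitian.apply j i, RCLike.star_def, RCLike.mul_conj, RCLike.ofReal_pow]
  rw [hi, zero_mul, zero_sub, hnorm, ← RCLike.ofReal_neg, RCLike.ofReal_nonneg] at hminor
  have hsq : ‖A i j‖ ^ 2 = 0 := le_antisymm (neg_nonneg.mp hminor) (sq_nonneg _)
  simpa using hsq

theorem mdeg_eq_degree {n : ℕ} (α : Fin n →₀ ℕ) : mdeg α = α.degree :=
  (Finsupp.degree_eq_sum α).symm

theorem moment_add_eq_zero_of_moment_add_self_eq_zero {n k : ℕ} {w : (Fin n →₀ ℕ) → ℝ}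
    (hpsd : (momentMatrix k w).PosSemidef) {β γ : Fin n →₀ ℕ}
    (hβ : mdeg β ≤ k) (hγ : mdeg γ ≤ k) (h : w (β + β) = 0) : w (β + γ) = 0 :=
  posSemidef_apply_eq_zero_of_diag_eq_zero hpsd (i := ⟨β, hβ⟩) h ⟨γ, hγ⟩

theorem statement_13_general {n k : ℕ} {w : (Fin n →₀ ℕ) → ℝ}
    (hpsd : (momentMatrix k w).PosSemidef) (h0 : w 0 = 0)
    (α : Fin n →₀ ℕ) (hα : mdeg α < 2 * k) : w α = 0 := by
  rw [mdeg_eq_degree] at hα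
  induction hd : α.degree using Nat.strong_induction_on generalizing α with
  | _ d ih =>
    obtain ⟨β, hβα, hβ⟩ := α.exists_le_degree_eq (α.degree - k) (Nat.sub_le _ _)
    obtain ⟨γ, rfl⟩ := exists_add_of_le hβα
    rw [map_add] at hα hβ hd
    have hdiag : w (β + β) = 0 := by
      rcases eq_or_ne β 0 with rfl | hβ0
      · rwa [add_zero]
      · have hβpos : β.degree ≠ 0 := mt (Finsupp.degree_eq_zero_iff β).mp hβ0
        have hdeg : (β + β).degree = β.degree + β.degree := map_add _ β β
        exact ih _ (by omega) _ (by omega) rfl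
    have hβk : mdeg β ≤ k := by rw [mdeg_eq_degree]; omega
    have hγk : mdeg γ ≤ k := by rw [mdeg_eq_degree]; omega
    exact moment_add_eq_zero_of_moment_add_self_eq_zero hpsd hβk hγk hdiag

/-- if the moment matrix `M_k[w]` is positive semidefinite and
`w_0 = 0`, then `w_α = 0` for all `|α| ≤ 2k - 2`. -/
theorem statement_13
    (n k : ℕ) (hk : 1 ≤ k) (w : (Fin n →₀ ℕ) → ℝ)
    (hpsd : (momentMatrix k w).PosSemidef)
    (h0 : w 0 = 0) :
    ∀ α : Fin n →₀ ℕ, mdeg α ≤ 2 * k - 2 → w α = 0 :=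
  fun α hα => statement_13_general hpsd h0 α (by omega)
end

section
/- In ℝ[x_1,…,x_6], let c_1 = x_1² + x_2² + x_3² + x_4² + x_5² + x_6² − 2, c_2 = 2(x_1² + x_2² + x_3²) − x_4, c_3 = x_4 − 2(x_5² + x_6²). Then: (a) the polynomial x_4 − 1 vanishes at every point of the real variety V_ℝ(c_1,c_2,c_3) = {x ∈ ℝ⁶ : c_1(x) = c_2(x) = c_3(x) = 0}; (b) x_4 − 1 does not belong to the ideal of ℝ[x_1,…,x_6] generated by c_1, c_2, c_3. In particular, this ideal is not real radical. -/
open MvPolynomial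

/-!
The combination `2c₁ - c₂ + c₃` equals `2(x₄ - 1)(x₄ + 2)`, so `x₄` takes only the values `1` and
`-2` on the common zeros of `c₁, c₂, c₃`. Over an ordered ring `c₃ = 0` makes `x₄` twice a sum of
squares, which rules out `-2`. Once `-1` has a square root `i`, however, the point
`(i, 0, 0, -2, i, 0)` is a common zero; there `x₄ - 1` takes the value `-3`, so it is not in the
ideal.
-/

theorem aeval_eq_zero_of_mem_span {σ R A : Type*} [CommSemiring R] [CommSemiring A] [Algebra R A]
    {S : Set (MvPolynomial σ R)} {x : σ → A} (hS : ∀ q ∈ S, aeval x q = 0)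
    {p : MvPolynomial σ R} (hp : p ∈ Ideal.span S) : aeval x p = 0 :=
  (Ideal.span_le (I := RingHom.ker (aeval x))).mpr hS hp

section Constraints

variable (R : Type*) [CommRing R]

/-- The constraint `c₁` over an arbitrary coefficient ring. The variables `x₁, …, x₆` are
`X 0, …, X 5`. -/
noncomputable def c₁ : MvPolynomial (Fin 6) R :=
  X 0 ^ 2 + X 1 ^ 2 + X 2 ^ 2 + X 3 ^ 2 + X 4 ^ 2 + X 5 ^ 2 - C 2

/-- The constraint `c₂` over an arbitrary coefficient ring, with variables indexed as in `c₁`. -/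
noncomputable def c₂ : MvPolynomial (Fin 6) R :=
  C 2 * (X 0 ^ 2 + X 1 ^ 2 + X 2 ^ 2) - X 3

/-- The constraint `c₃` over an arbitrary coefficient ring, with variables indexed as in `c₁`. -/
noncomputable def c₃ : MvPolynomial (Fin 6) R :=
  X 3 - C 2 * (X 4 ^ 2 + X 5 ^ 2)

theorem two_mul_c₁_sub_c₂_add_c₃ :
    2 * c₁ R - c₂ R + c₃ R = 2 * ((X 3 - 1) * (X 3 + 2)) := by
  simp only [c₁, c₂, c₃, map_ofNat]
  ring

end Constraints

theorem eq_one_or_eq_neg_two_of_eval_eq_zero {R : Type*} [CommRing R] [NoZeroDivisors R]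
    [NeZero (2 : R)] {x : Fin 6 → R} (h₁ : eval x (c₁ R) = 0) (h₂ : eval x (c₂ R) = 0)
    (h₃ : eval x (c₃ R) = 0) : x 3 = 1 ∨ x 3 = -2 := by
  have h : 2 * ((x 3 - 1) * (x 3 + 2)) = 0 := by
    simpa [h₁, h₂, h₃] using (congrArg (eval x) (two_mul_c₁_sub_c₂_add_c₃ R)).symm
  simpa only [mul_eq_zero, two_ne_zero, false_or, sub_eq_zero, add_eq_zero_iff_eq_neg] using h

section OrderedRing

variable {R : Type*} [CommRing R] [LinearOrder R] [IsStrictOrderedRing R] {x : Fin 6 → R}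

theorem nonneg_of_eval_c₃_eq_zero (h₃ : eval x (c₃ R) = 0) : 0 ≤ x 3 := by
  have h : x 3 = 2 * (x 4 ^ 2 + x 5 ^ 2) := by simpa [c₃, sub_eq_zero] using h₃
  rw [h]
  positivity

theorem eq_one_of_eval_eq_zero (h₁ : eval x (c₁ R) = 0) (h₂ : eval x (c₂ R) = 0)
    (h₃ : eval x (c₃ R) = 0) : x 3 = 1 := by
  refine (eq_one_or_eq_neg_two_of_eval_eq_zero h₁ h₂ h₃).resolve_right fun h => ?_
  linarith [nonneg_of_eval_c₃_eq_zero h₃]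

end OrderedRing

section ImaginaryPoint

/-- The point `(i, 0, 0, -2, i, 0)`. It is a common zero of `c₁, c₂, c₃` when `i² = -1`. -/
def imaginaryPoint {A : Type*} [CommRing A] (i : A) : Fin 6 → A := ![i, 0, 0, -2, i, 0]

variable {R A : Type*} [CommRing R] [CommRing A] [Algebra R A] {i : A}

theorem aeval_imaginaryPoint_c₁ (hi : i ^ 2 = -1) : aeval (imaginaryPoint i) (c₁ R) = 0 := by
  have h : i ^ 2 + (-2) ^ 2 + i ^ 2 - 2 = 0 := by linear_combination 2 * hi
  simpa [c₁, imaginaryPoint, map_ofNat] using h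

theorem aeval_imaginaryPoint_c₂ (hi : i ^ 2 = -1) : aeval (imaginaryPoint i) (c₂ R) = 0 := by
  simp [c₂, imaginaryPoint, map_ofNat, hi]

theorem aeval_imaginaryPoint_c₃ (hi : i ^ 2 = -1) : aeval (imaginaryPoint i) (c₃ R) = 0 := by
  simp [c₃, imaginaryPoint, map_ofNat, hi]

theorem aeval_imaginaryPoint_X_three_sub_one :
    aeval (imaginaryPoint i) (X 3 - C 1 : MvPolynomial (Fin 6) R) = -3 := by
  have h : (-2 - 1 : A) = -3 := by norm_num
  simpa [imaginaryPoint] using h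

theorem three_eq_zero_of_X_three_sub_one_mem_span (hi : i ^ 2 = -1)
    (hmem : (X 3 - C 1 : MvPolynomial (Fin 6) R) ∈ Ideal.span {c₁ R, c₂ R, c₃ R}) :
    (3 : A) = 0 := by
  have hzero : ∀ q ∈ ({c₁ R, c₂ R, c₃ R} : Set _), aeval (imaginaryPoint i) q = 0 := by
    rintro q (rfl | rfl | rfl)
    exacts [aeval_imaginaryPoint_c₁ hi, aeval_imaginaryPoint_c₂ hi, aeval_imaginaryPoint_c₃ hi]
  have h := aeval_eq_zero_of_mem_span hzero hmem
  rwa [aeval_imaginaryPoint_X_three_sub_one, neg_eq_zero] at h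

end ImaginaryPoint

theorem X_three_sub_one_notMem_span {R : Type*} [CommRing R] (h3 : (3 : R) ≠ 0) :
    (X 3 - C 1 : MvPolynomial (Fin 6) R) ∉ Ideal.span {c₁ R, c₂ R, c₃ R} := by
  intro hmem
  have hi : (QuadraticAlgebra.omega : QuadraticAlgebra R (-1) 0) ^ 2 = -1 := by
    simp [sq, QuadraticAlgebra.omega_mul_omega_eq_add]
  have h := three_eq_zero_of_X_three_sub_one_mem_span hi hmem
  exact h3 (QuadraticAlgebra.algebraMap_injective (by rwa [map_ofNat, map_zero]))

theorem statement_17_general (R : Type*) [CommRing R] [LinearOrder R] [IsStrictOrderedRing R] :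
    (∀ x : Fin 6 → R, eval x (c₁ R) = 0 → eval x (c₂ R) = 0 → eval x (c₃ R) = 0 →
      eval x (X 3 - C 1 : MvPolynomial (Fin 6) R) = 0) ∧
    (X 3 - C 1 : MvPolynomial (Fin 6) R) ∉ Ideal.span {c₁ R, c₂ R, c₃ R} := by
  refine ⟨fun x h₁ h₂ h₃ => ?_, X_three_sub_one_notMem_span three_ne_zero⟩
  simp [eq_one_of_eval_eq_zero h₁ h₂ h₃]

/-- Example 3.5: for `c₁ = ∑ xᵢ² - 2`, `c₂ = 2(x₁²+x₂²+x₃²) - x₄`,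
`c₃ = x₄ - 2(x₅²+x₆²)` in `ℝ[x₁,…,x₆]`, the polynomial `x₄ - 1` vanishes on the real
variety `V_ℝ(c₁,c₂,c₃)` but does not belong to the ideal generated by `c₁, c₂, c₃`;
in particular this ideal is not real radical. -/
theorem statement_17
    (c1 c2 c3 : MvPolynomial (Fin 6) ℝ)
    (hc1 : c1 = X 0 ^ 2 + X 1 ^ 2 + X 2 ^ 2 + X 3 ^ 2 + X 4 ^ 2 + X 5 ^ 2 - C 2)
    (hc2 : c2 = C 2 * (X 0 ^ 2 + X 1 ^ 2 + X 2 ^ 2) - X 3)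
    (hc3 : c3 = X 3 - C 2 * (X 4 ^ 2 + X 5 ^ 2)) :
    (∀ x : Fin 6 → ℝ, eval x c1 = 0 → eval x c2 = 0 → eval x c3 = 0 →
      eval x (X 3 - C 1 : MvPolynomial (Fin 6) ℝ) = 0) ∧
    (X 3 - C 1 : MvPolynomial (Fin 6) ℝ) ∉ Ideal.span {c1, c2, c3} := by
  subst hc1 hc2 hc3
  exact statement_17_general ℝ
end

section
/- In ℝ[x_0,x_1,x_2,x_3], let g_1 = x_1x_2x_3, g_2 = x_3(x_1² + x_2² + x_3² + x_2x_0), g_3 = x_2(x_2 + x_3), g_4 = x_0² + x_1² + x_2² + x_3² − 1. Then: (a) the polynomial x_1x_3 vanishes at every point of the real variety V_ℝ(g_1,g_2,g_3,g_4) = {x̃ ∈ ℝ⁴ : g_1(x̃) = g_2(x̃) = g_3(x̃) = g_4(x̃) = 0}; (b) x_1x_3 does not belong to the ideal of ℝ[x_0,x_1,x_2,x_3] generated by g_1, g_2, g_3, g_4. In particular, this ideal is not real radical. -/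
open MvPolynomial

/-!
If `x₁x₃ ≠ 0` at a common zero, then `g₁` forces `x₂ = 0`, and `g₂` becomes `x₃(x₁² + x₃²)`, a
contradiction because over an ordered ring a sum of two squares vanishes only trivially. Once `-1`
has a square root `i` this last step fails: `(1, 1, 0, i)` is a common zero of all four generators
at which `x₁x₃ = i ≠ 0`. Evaluation at that point annihilates the ideal but not `x₁x₃`.
-/

theorem notMem_span_of_aeval_ne_zero {σ R A : Type*} [CommSemiring R] [CommSemiring A]
    [Algebra R A] {s : Set (MvPolynomial σ R)} {p : MvPolynomial σ R} (x : σ → A)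
    (hs : ∀ g ∈ s, aeval x g = 0) (hp : aeval x p ≠ 0) : p ∉ Ideal.span s := by
  have hker : Ideal.span s ≤ RingHom.ker (aeval x : MvPolynomial σ R →ₐ[R] A) :=
    Ideal.span_le.2 hs
  exact fun hmem ↦ hp (hker hmem)

theorem quadraticAlgebra_omega_sq {R : Type*} [CommSemiring R] (a : R) :
    (QuadraticAlgebra.omega : QuadraticAlgebra R a 0) ^ 2 = algebraMap R _ a := by
  rw [sq, QuadraticAlgebra.omega_mul_omega_eq_algebraMap, map_zero, zero_mul, add_zero]

theorem mul_eq_zero_of_mul_mul_eq_zero_of_mul_sq_add_eq_zero {R : Type*} [CommRing R]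
    [LinearOrder R] [IsStrictOrderedRing R] {x₀ x₁ x₂ x₃ : R} (h₁ : x₁ * x₂ * x₃ = 0)
    (h₂ : x₃ * (x₁ ^ 2 + x₂ ^ 2 + x₃ ^ 2 + x₂ * x₀) = 0) : x₁ * x₃ = 0 := by
  by_contra hne
  obtain ⟨hx₁, hx₃⟩ := mul_ne_zero_iff.1 hne
  have hx₂ : x₂ = 0 := by simpa [hx₁, hx₃] using h₁
  have hsum : x₁ ^ 2 + x₃ ^ 2 = 0 := by simpa [hx₂, hx₃] using h₂
  have hpos : 0 < x₁ ^ 2 + x₃ ^ 2 := by positivity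
  exact hpos.ne' hsum

theorem X_one_mul_X_three_notMem_span (R : Type*) [CommRing R] [Nontrivial R] :
    (X 1 * X 3 : MvPolynomial (Fin 4) R) ∉ Ideal.span
      {X 1 * X 2 * X 3, X 3 * (X 1 ^ 2 + X 2 ^ 2 + X 3 ^ 2 + X 2 * X 0),
        X 2 * (X 2 + X 3), X 0 ^ 2 + X 1 ^ 2 + X 2 ^ 2 + X 3 ^ 2 - C 1} := by
  let i : QuadraticAlgebra R (-1) 0 := QuadraticAlgebra.omega
  have hi : i ^ 2 = -1 := by rw [quadraticAlgebra_omega_sq, map_neg, map_one]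
  have hi₀ : i ≠ 0 := by
    intro h
    simp [h] at hi
  refine notMem_span_of_aeval_ne_zero ![1, 1, 0, i] ?_ (by simpa using hi₀)
  rintro g (rfl | rfl | rfl | rfl) <;> simp [hi]

theorem statement_18_general {R : Type*} [CommRing R] [LinearOrder R] [IsStrictOrderedRing R]
    (g1 g2 g3 g4 : MvPolynomial (Fin 4) R)
    (hg1 : g1 = X 1 * X 2 * X 3)
    (hg2 : g2 = X 3 * (X 1 ^ 2 + X 2 ^ 2 + X 3 ^ 2 + X 2 * X 0))
    (hg3 : g3 = X 2 * (X 2 + X 3))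
    (hg4 : g4 = X 0 ^ 2 + X 1 ^ 2 + X 2 ^ 2 + X 3 ^ 2 - C 1) :
    (∀ x : Fin 4 → R, eval x g1 = 0 → eval x g2 = 0 →
      eval x (X 1 * X 3 : MvPolynomial (Fin 4) R) = 0) ∧
    (X 1 * X 3 : MvPolynomial (Fin 4) R) ∉ Ideal.span {g1, g2, g3, g4} := by
  subst hg1 hg2 hg3 hg4
  refine ⟨fun x h₁ h₂ ↦ ?_, X_one_mul_X_three_notMem_span R⟩
  simp only [map_mul, map_add, map_pow, eval_X] at h₁ h₂ ⊢
  exact mul_eq_zero_of_mul_mul_eq_zero_of_mul_sq_add_eq_zero h₁ h₂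

/-- Example 4.5: in `ℝ[x₀,x₁,x₂,x₃]`, with
`g₁ = x₁x₂x₃`, `g₂ = x₃(x₁²+x₂²+x₃²+x₂x₀)`, `g₃ = x₂(x₂+x₃)`,
`g₄ = x₀²+x₁²+x₂²+x₃²-1`, the polynomial `x₁x₃` vanishes on the real variety
`V_ℝ(g₁,g₂,g₃,g₄)` but does not belong to the ideal generated by `g₁,g₂,g₃,g₄`;
in particular this ideal is not real radical. -/
theorem statement_18
    (g1 g2 g3 g4 : MvPolynomial (Fin 4) ℝ)
    (hg1 : g1 = X 1 * X 2 * X 3)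
    (hg2 : g2 = X 3 * (X 1 ^ 2 + X 2 ^ 2 + X 3 ^ 2 + X 2 * X 0))
    (hg3 : g3 = X 2 * (X 2 + X 3))
    (hg4 : g4 = X 0 ^ 2 + X 1 ^ 2 + X 2 ^ 2 + X 3 ^ 2 - C 1) :
    (∀ x : Fin 4 → ℝ, eval x g1 = 0 → eval x g2 = 0 → eval x g3 = 0 → eval x g4 = 0 →
      eval x (X 1 * X 3 : MvPolynomial (Fin 4) ℝ) = 0) ∧
    (X 1 * X 3 : MvPolynomial (Fin 4) ℝ) ∉ Ideal.span {g1, g2, g3, g4} := by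
  obtain ⟨hvanish, hnotMem⟩ := statement_18_general g1 g2 g3 g4 hg1 hg2 hg3 hg4
  exact ⟨fun x h1 h2 _ _ ↦ hvanish x h1 h2, hnotMem⟩
end

section
/- In ℝ[x_0,x_1,x_2,x_3], let g_1 = x_1³ − x_2³ − x_3³ − x_0³, g_2 = x_0² + x_1² + x_2² + x_3² − 1, g_3 = (x_1⁴ + x_0⁴)(x_1 − x_0) + (x_1² − x_1x_0)(x_1x_2² − 2x_2x_0²). Then: (a) the polynomial x_2 + x_3 vanishes at every point of the real variety V_ℝ(g_1,g_2,g_3) = {x̃ ∈ ℝ⁴ : g_1(x̃) = g_2(x̃) = g_3(x̃) = 0}; (b) x_2 + x_3 does not belong to the ideal of ℝ[x_0,x_1,x_2,x_3] generated by g_1, g_2, g_3. In particular, this ideal is not real radical. -/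
open MvPolynomial

/-!
The third generator factors as `(x₁ - x₀) * ((x₁²)² + (x₀² - x₁ x₂)²)`. Over an ordered ring the sum
of squares vanishes only for `x₁ = x₀ = 0`, so `x₁ = x₀` on the real variety; the first generator
then reads `x₂³ = (-x₃)³`, whence `x₂ = -x₃`. The ideal nevertheless has the nonreal zero
`(0, 0, ζ, ζ⁻¹)` with `ζ` a primitive twelfth root of unity, where `(x₂ + x₃)² = 3`.
-/

section Cyclotomic

theorem algebraMap_adjoinRoot_injective_of_monic {R : Type*} [CommRing R] {f : Polynomial R}
    (hmonic : f.Monic) (hne : f ≠ 1) : Function.Injective (algebraMap R (AdjoinRoot f)) := by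
  have : Module.Free R (AdjoinRoot f) := hmonic.free_adjoinRoot
  have : Nontrivial (AdjoinRoot f) := by
    rwa [AdjoinRoot, Ideal.Quotient.nontrivial_iff, Ne, Ideal.span_singleton_eq_top,
      hmonic.isUnit_iff]
  exact FaithfulSMul.algebraMap_injective R (AdjoinRoot f)

variable (R : Type*) [CommRing R]

theorem algebraMap_adjoinRoot_cyclotomic_injective {n : ℕ} (hn : 0 < n) :
    Function.Injective (algebraMap R (AdjoinRoot (Polynomial.cyclotomic n R))) := by
  nontriviality R
  refine algebraMap_adjoinRoot_injective_of_monic (Polynomial.cyclotomic.monic n R) fun h ↦ ?_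
  simpa [h] using Polynomial.degree_cyclotomic_pos n R hn

theorem cyclotomic_twelve : Polynomial.cyclotomic 12 R = .X ^ 4 - .X ^ 2 + 1 := by
  have hexpand : Polynomial.expand R 2 (.cyclotomic 6 R) = .cyclotomic 12 R :=
    Polynomial.cyclotomic_expand_eq_cyclotomic Nat.prime_two (by decide) R
  rw [← hexpand, Polynomial.cyclotomic_six]
  simp [← pow_mul]

theorem exists_adjoinRoot_mul_eq_one_and_add_sq_eq_three :
    ∃ a b : AdjoinRoot (Polynomial.cyclotomic 12 R), a * b = 1 ∧ (a + b) ^ 2 = 3 := by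
  let ζ := AdjoinRoot.root (Polynomial.cyclotomic 12 R)
  have hζ : ζ ^ 4 - ζ ^ 2 + 1 = 0 := by
    simpa [cyclotomic_twelve] using AdjoinRoot.eval₂_root (Polynomial.cyclotomic 12 R)
  refine ⟨ζ, ζ - ζ ^ 3, ?_, ?_⟩
  · linear_combination -hζ
  · linear_combination (ζ ^ 2 - 3) * hζ

end Cyclotomic

section Generators

variable (R : Type*) [CommRing R]

/-- The generator `g₁`, over an arbitrary coefficient ring. -/
noncomputable def cubicForm : MvPolynomial (Fin 4) R :=
  X 1 ^ 3 - X 2 ^ 3 - X 3 ^ 3 - X 0 ^ 3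

/-- The generator `g₂`, cutting out the unit sphere, over an arbitrary coefficient ring. -/
noncomputable def unitSpherePolynomial : MvPolynomial (Fin 4) R :=
  X 0 ^ 2 + X 1 ^ 2 + X 2 ^ 2 + X 3 ^ 2 - C 1

/-- The generator `g₃`, over an arbitrary coefficient ring. -/
noncomputable def quinticForm : MvPolynomial (Fin 4) R :=
  (X 1 ^ 4 + X 0 ^ 4) * (X 1 - X 0) +
    (X 1 ^ 2 - X 1 * X 0) * (X 1 * X 2 ^ 2 - C 2 * X 2 * X 0 ^ 2)

theorem quinticForm_eq_mul_sum_sq :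
    quinticForm R = (X 1 - X 0) * ((X 1 ^ 2) ^ 2 + (X 0 ^ 2 - X 1 * X 2) ^ 2) := by
  rw [quinticForm, map_ofNat]
  ring

end Generators

section RealPoints

variable {R : Type*} [CommRing R] [LinearOrder R] [IsStrictOrderedRing R] {x : Fin 4 → R}

theorem eq_of_eval_quinticForm_eq_zero (hx : eval x (quinticForm R) = 0) : x 1 = x 0 := by
  have hfactored : (x 1 - x 0) * ((x 1 ^ 2) ^ 2 + (x 0 ^ 2 - x 1 * x 2) ^ 2) = 0 := by
    simpa [quinticForm_eq_mul_sum_sq] using hx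
  rcases mul_eq_zero.mp hfactored with hlinear | hsum
  · exact sub_eq_zero.mp hlinear
  · obtain ⟨hfst, hsnd⟩ :=
      (add_eq_zero_iff_of_nonneg (sq_nonneg _) (sq_nonneg _)).mp hsum
    have hx₁ : x 1 = 0 := by simpa using hfst
    have hx₀ : x 0 = 0 := by simpa [hx₁] using hsnd
    rw [hx₁, hx₀]

theorem add_eq_zero_of_eval_cubicForm_eq_zero (hx : eval x (cubicForm R) = 0)
    (h : x 1 = x 0) : x 2 + x 3 = 0 := by
  have hcubes : x 2 ^ 3 = (-x 3) ^ 3 := by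
    simp only [cubicForm, map_sub, map_pow, eval_X, h] at hx
    linear_combination -hx
  have hodd : Odd 3 := by decide
  exact eq_neg_iff_add_eq_zero.mp (hodd.pow_inj.mp hcubes)

end RealPoints

section NonrealPoints

variable {R : Type*} [CommRing R] {A : Type*} [CommRing A] [Algebra R A]

theorem span_generators_le_ker_aeval {a b : A} (hmul : a * b = 1) (hadd : (a + b) ^ 2 = 3) :
    Ideal.span {cubicForm R, unitSpherePolynomial R, quinticForm R} ≤
      RingHom.ker (aeval (R := R) ![0, 0, a, b]) := by
  have hcubes : a ^ 3 + b ^ 3 = 0 := by linear_combination (a + b) * hadd - 3 * (a + b) * hmul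
  have hsquares : a ^ 2 + b ^ 2 = 1 := by linear_combination hadd - 2 * hmul
  rw [Ideal.span_le]
  rintro p (rfl | rfl | rfl)
  · simp [cubicForm, ← neg_add', hcubes]
  · simp [unitSpherePolynomial, hsquares]
  · simp [quinticForm_eq_mul_sum_sq]

theorem isNilpotent_three_of_mem_radical_span_generators {a b : A} (hmul : a * b = 1)
    (hadd : (a + b) ^ 2 = 3)
    (hmem : X 2 + X 3 ∈
      (Ideal.span {cubicForm R, unitSpherePolynomial R, quinticForm R}).radical) :
    IsNilpotent (3 : A) := by
  obtain ⟨n, hn⟩ := hmem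
  have hpow : (a + b) ^ n = 0 := by
    simpa using span_generators_le_ker_aeval hmul hadd hn
  exact ⟨n, by rw [← hadd, pow_right_comm, hpow, zero_pow two_ne_zero]⟩

theorem X_two_add_X_three_notMem_radical_span_generators (h : ¬IsNilpotent (3 : R)) :
    X 2 + X 3 ∉ (Ideal.span {cubicForm R, unitSpherePolynomial R, quinticForm R}).radical := by
  intro hmem
  obtain ⟨a, b, hmul, hadd⟩ := exists_adjoinRoot_mul_eq_one_and_add_sq_eq_three R
  have hnilpotent := isNilpotent_three_of_mem_radical_span_generators hmul hadd hmem
  rw [← map_ofNat (algebraMap R _) 3,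
    IsNilpotent.map_iff (algebraMap_adjoinRoot_cyclotomic_injective R (by decide))] at hnilpotent
  exact h hnilpotent

end NonrealPoints

theorem statement_19_general (R : Type*) [CommRing R] [LinearOrder R] [IsStrictOrderedRing R] :
    (∀ x : Fin 4 → R, eval x (cubicForm R) = 0 → eval x (quinticForm R) = 0 →
      eval x (X 2 + X 3 : MvPolynomial (Fin 4) R) = 0) ∧
    (X 2 + X 3 : MvPolynomial (Fin 4) R) ∉
      (Ideal.span {cubicForm R, unitSpherePolynomial R, quinticForm R}).radical := by
  constructor
  · intro x hcubic hquintic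
    simpa using add_eq_zero_of_eval_cubicForm_eq_zero hcubic
      (eq_of_eval_quinticForm_eq_zero hquintic)
  · exact X_two_add_X_three_notMem_radical_span_generators
      fun h ↦ three_ne_zero h.eq_zero

/-- Example 4.7: in `ℝ[x₀,x₁,x₂,x₃]`, with
`g₁ = x₁³-x₂³-x₃³-x₀³`, `g₂ = x₀²+x₁²+x₂²+x₃²-1`,
`g₃ = (x₁⁴+x₀⁴)(x₁-x₀) + (x₁²-x₁x₀)(x₁x₂²-2x₂x₀²)`, the polynomial `x₂+x₃`
vanishes on the real variety `V_ℝ(g₁,g₂,g₃)` but does not belong to the ideal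
generated by `g₁,g₂,g₃`; in particular this ideal is not real radical. -/
theorem statement_19
    (g1 g2 g3 : MvPolynomial (Fin 4) ℝ)
    (hg1 : g1 = X 1 ^ 3 - X 2 ^ 3 - X 3 ^ 3 - X 0 ^ 3)
    (hg2 : g2 = X 0 ^ 2 + X 1 ^ 2 + X 2 ^ 2 + X 3 ^ 2 - C 1)
    (hg3 : g3 = (X 1 ^ 4 + X 0 ^ 4) * (X 1 - X 0) +
      (X 1 ^ 2 - X 1 * X 0) * (X 1 * X 2 ^ 2 - C 2 * X 2 * X 0 ^ 2)) :
    (∀ x : Fin 4 → ℝ, eval x g1 = 0 → eval x g2 = 0 → eval x g3 = 0 →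
      eval x (X 2 + X 3 : MvPolynomial (Fin 4) ℝ) = 0) ∧
    (X 2 + X 3 : MvPolynomial (Fin 4) ℝ) ∉ Ideal.span {g1, g2, g3} := by
  subst hg1 hg2 hg3
  have h := statement_19_general ℝ
  exact ⟨fun x hx₁ _ hx₃ ↦ h.1 x hx₁ hx₃, fun hmem ↦ h.2 (Ideal.le_radical hmem)⟩
end
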